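/- Let k ≥ 1 and let φ = ∃X.∀Y.ψ be a quantified Boolean formula where X = {x₁,…,xₙ} and Y = {y₁,…,y_m} are disjoint sets of variables and ψ = δ₁ ∨ … ∨ δ_u is a 3DNF formula with δ_ℓ = l^ℓ₁ ∧ l^ℓ₂ ∧ l^ℓ₃ for each 1 ≤ ℓ ≤ u. Let σ map literals to atoms by σ(x_i) = x_i, σ(¬x_i) = v_i, σ(y_j) = y_j, σ(¬y_j) = z_j, and let P be the disjunctive logic program over the atoms X ∪ Y ∪ {v₁,…,vₙ} ∪ {z₁,…,z_m} ∪ {w} ∪ {x^j_i : 1 ≤ j ≤ k, 1 ≤ i ≤ n} consisting of the rules: (x^j_1 ∨ … ∨ x^j_n ←) for 1 ≤ j ≤ k; (← x^j_i, x^{j′}_i) for 1 ≤ i ≤ n and 1 ≤ j < j′ ≤ k; (y_i ∨ z_i ←) and (w ← y_i, z_i) and (y_i ← w) and (z_i ← w) for 1 ≤ i ≤ m; (x_i ← w) and (v_i ← w) for 1 ≤ i ≤ n; (x_i ← x^j_i) for 1 ≤ i ≤ n and 1 ≤ j ≤ k; (v_i ← not x^1_i, …, not x^k_i) for 1 ≤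 i ≤ n; (w ← σ(l^ℓ₁), σ(l^ℓ₂), σ(l^ℓ₃)) for 1 ≤ ℓ ≤ u; and (w ← not w). Then Comp(P) = {w} ∪ {x_i, v_i : 1 ≤ i ≤ n} ∪ {y_i, z_i : 1 ≤ i ≤ m}, the contingent rules of P are exactly the k rules (x^j_1 ∨ … ∨ x^j_n ←), and the following are equivalent: (1) there exists a truth assignment α : X → Bool of weight k such that for every truth assignment β : Y → Bool the assignment α ∪ β satisfies ψ; (2) P has an answer set. -/

import Mathlib

/-- A rule of a disjunctive logic program: `head` is the (disjunctive) head,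
`pos` the positive body atoms and `neg` the (default-negated) negative body atoms. -/
structure Rule (A : Type) where
  head : Finset A
  pos : Finset A
  neg : Finset A

namespace Rule
variable {A : Type}

/-- A rule is normal if its head contains at most one atom. -/
def isNormal (r : Rule A) : Prop := r.head.card ≤ 1

/-- A rule is disjunctive if its head contains more than one atom. -/
def isDisjunctive (r : Rule A) : Prop := 1 < r.head.card

/-- A rule is negation-free if its negative body is empty. -/
def negFree (r : Rule A) : Prop := r.neg = ∅

/-- A set `M` of atoms satisfies a (negation-free) rule if, whenever all atoms of the
positive body belong to `M`, some head atom belongs to `M`. -/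
def satisfiedBy (r : Rule A) (M : Set A) : Prop :=
  (∀ b ∈ r.pos, b ∈ M) → ∃ a ∈ r.head, a ∈ M

end Rule

/-- The set of atoms occurring in a program. -/
def progAtoms {A : Type} (P : Set (Rule A)) : Set A :=
  {a | ∃ r ∈ P, a ∈ r.head ∨ a ∈ r.pos ∨ a ∈ r.neg}

/-- `M` is a model of the (negation-free) program `P`. -/
def isModel {A : Type} (P : Set (Rule A)) (M : Set A) : Prop :=
  ∀ r ∈ P, r.satisfiedBy M

/-- `M` is a minimal model of the (negation-free) program `P`. -/
def isMinimalModel {A : Type} (P : Set (Rule A)) (M : Set A) : Prop :=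
  isModel P M ∧ ∀ M' : Set A, M' ⊂ M → ¬ isModel P M'

/-- The GL reduct of `P` with respect to `M`: remove every rule whose negative body
meets `M`, and delete the negative bodies of the remaining rules. -/
def reduct {A : Type} (P : Set (Rule A)) (M : Set A) : Set (Rule A) :=
  {r' | ∃ r ∈ P, (∀ c ∈ r.neg, c ∉ M) ∧ r' = ⟨r.head, r.pos, ∅⟩}

/-- An answer set of `P` is a set `M ⊆ Atoms(P)` that is a subset-minimal model
of the reduct `P^M`. -/
def isAnswerSet {A : Type} (P : Set (Rule A)) (M : Set A) : Prop :=
  M ⊆ progAtoms P ∧ isMinimalModel (reduct P M) M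

/-- The compulsory atoms `Comp(P)`: the smallest set of atoms such that (i) if
`(w ← not w)` is a rule of `P` then `w` is compulsory, and (ii) if `(b ← a₁,…,aₙ)`
is a normal negation-free rule of `P` all of whose body atoms are compulsory,
then `b` is compulsory. -/
inductive Compulsory {A : Type} (P : Set (Rule A)) : A → Prop
  | loop (w : A) : (⟨{w}, ∅, {w}⟩ : Rule A) ∈ P → Compulsory P w
  | rule (r : Rule A) (b : A) : r ∈ P → r.head = {b} → r.neg = ∅ →
      (∀ a ∈ r.pos, Compulsory P a) → Compulsory P b

/-- The contingent atoms `Cont(P) = Atoms(P) ∖ Comp(P)`. -/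
def ContingentAtoms {A : Type} (P : Set (Rule A)) : Set A :=
  progAtoms P \ {a | Compulsory P a}

/-- A rule of `P` is contingent if its head contains a contingent atom. -/
def isContingentRule {A : Type} (P : Set (Rule A)) (r : Rule A) : Prop :=
  r ∈ P ∧ ∃ a ∈ r.head, a ∈ ContingentAtoms P

/-- The weight of a truth assignment: the number of variables it maps to true. -/
def weight {X : Type} [Fintype X] (α : X → Bool) : ℕ :=
  (Finset.univ.filter fun x => α x = true).card

/-- The atoms of the constructed program: the variables `x₁,…,xₙ` and `y₁,…,y_m` of the
quantified Boolean formula, the fresh atoms `v₁,…,vₙ`, `z₁,…,z_m`, `w`, and `x^j_i`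
for `1 ≤ j ≤ k`, `1 ≤ i ≤ n`. -/
inductive Atom1 (n m k : ℕ) : Type
  | x (i : Fin n)
  | y (i : Fin m)
  | v (i : Fin n)
  | z (i : Fin m)
  | w
  | xj (j : Fin k) (i : Fin n)
deriving DecidableEq

/-- The mapping `σ` from literals over `X ∪ Y` to atoms:
`σ(x_i) = x_i`, `σ(¬x_i) = v_i`, `σ(y_i) = y_i`, `σ(¬y_i) = z_i`. -/
def sigma1 {n m : ℕ} (k : ℕ) (l : (Fin n ⊕ Fin m) × Bool) : Atom1 n m k :=
  match l with
  | (Sum.inl i, true) => Atom1.x i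
  | (Sum.inl i, false) => Atom1.v i
  | (Sum.inr i, true) => Atom1.y i
  | (Sum.inr i, false) => Atom1.z i

/-- The contingent "guessing" rule `(x^j_1 ∨ … ∨ x^j_n ←)`. -/
def guessRule1 (n m : ℕ) {k : ℕ} (j : Fin k) : Rule (Atom1 n m k) :=
  ⟨Finset.univ.image (Atom1.xj j), ∅, ∅⟩

/-- The disjunctive logic program `P` constructed from the 3DNF formula
`ψ = δ₁ ∨ … ∨ δ_u` (given by the literal table `δ`). -/
def prog1 (k : ℕ) {n m u : ℕ} (δ : Fin u → Fin 3 → (Fin n ⊕ Fin m) × Bool) :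
    Set (Rule (Atom1 n m k)) :=
  {r |
    (∃ j : Fin k, r = guessRule1 n m j)
    ∨ (∃ (i : Fin n) (j j' : Fin k), j < j' ∧
        r = ⟨∅, {Atom1.xj j i, Atom1.xj j' i}, ∅⟩)
    ∨ (∃ i : Fin m, r = ⟨{Atom1.y i, Atom1.z i}, ∅, ∅⟩)
    ∨ (∃ i : Fin m, r = ⟨{Atom1.w}, {Atom1.y i, Atom1.z i}, ∅⟩)
    ∨ (∃ i : Fin m, r = ⟨{Atom1.y i}, {Atom1.w}, ∅⟩)
    ∨ (∃ i : Fin m, r = ⟨{Atom1.z i}, {Atom1.w}, ∅⟩)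
    ∨ (∃ i : Fin n, r = ⟨{Atom1.x i}, {Atom1.w}, ∅⟩)
    ∨ (∃ i : Fin n, r = ⟨{Atom1.v i}, {Atom1.w}, ∅⟩)
    ∨ (∃ (i : Fin n) (j : Fin k), r = ⟨{Atom1.x i}, {Atom1.xj j i}, ∅⟩)
    ∨ (∃ i : Fin n,
        r = ⟨{Atom1.v i}, ∅, Finset.univ.image (fun j : Fin k => Atom1.xj j i)⟩)
    ∨ (∃ l : Fin u,
        r = ⟨{Atom1.w}, {sigma1 k (δ l 0), sigma1 k (δ l 1), sigma1 k (δ l 2)}, ∅⟩)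
    ∨ r = ⟨{Atom1.w}, ∅, {Atom1.w}⟩}

/-!
Every answer set contains `w`, hence all compulsory atoms, so it is determined by an injective
choice `f` of one atom `x^j_{f j}` per guessing rule, that is, by a weight-`k` assignment `α` to
`X`. Any model of the reduct inside this saturated set contains the atoms of the literals true under
`α ∪ β` for some assignment `β` to `Y`. If a term of `ψ` is true under `α ∪ β`, then `w` and all
compulsory atoms follow; otherwise these literals and the `x^j_{f j}` already form a model without
`w`. Hence the saturated set is minimal iff `α ∪ β` satisfies `ψ` for every `β`.
-/

section Programs

variable {A : Type} {P : Set (Rule A)}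

lemma isModel_reduct_iff {M N : Set A} :
    isModel (reduct P M) N ↔ ∀ r ∈ P, (∀ c ∈ r.neg, c ∉ M) → r.satisfiedBy N := by
  constructor
  · intro h r hr hneg
    exact h ⟨r.head, r.pos, ∅⟩ ⟨r, hr, hneg, rfl⟩
  · rintro h _ ⟨r, hr, hneg, rfl⟩
    exact h r hr hneg

lemma isMinimalModel_iff_minimal {M : Set A} : isMinimalModel P M ↔ Minimal (isModel P) M :=
  Set.minimal_iff_forall_ssubset.symm

lemma Compulsory.exists_head_eq {a : A} (h : Compulsory P a) : ∃ r ∈ P, r.head = {a} := by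
  cases h with
  | loop _ hr => exact ⟨_, hr, rfl⟩
  | rule r _ hr hhead => exact ⟨r, hr, hhead⟩

lemma Compulsory.of_singleton_pos {a b : A} (hb : Compulsory P b)
    (hr : (⟨{a}, {b}, ∅⟩ : Rule A) ∈ P) : Compulsory P a :=
  .rule _ a hr rfl rfl fun _ hc ↦ Finset.mem_singleton.mp hc ▸ hb

lemma Compulsory.mem_progAtoms {a : A} (h : Compulsory P a) : a ∈ progAtoms P := by
  obtain ⟨r, hr, hhead⟩ := h.exists_head_eq
  exact ⟨r, hr, .inl (hhead ▸ Finset.mem_singleton_self a)⟩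

lemma isContingentRule_iff {r : Rule A} :
    isContingentRule P r ↔ r ∈ P ∧ ∃ a ∈ r.head, ¬ Compulsory P a := by
  refine and_congr_right fun hr ↦ exists_congr fun a ↦ and_congr_right fun ha ↦ ?_
  exact and_iff_right ⟨r, hr, .inl ha⟩

end Programs

section Assignments

/-- Truth of a formula in disjunctive normal form: `τ` satisfies all literals `δ l d` of some term
`δ l`. A literal is encoded as a variable paired with the truth value that makes it true. -/
def SatisfiesDNF {V ι κ : Type*} (δ : ι → κ → V × Bool) (τ : V → Bool) : Prop :=
  ∃ l, ∀ d, τ (δ l d).1 = (δ l d).2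

variable {X : Type} [DecidableEq X] {k : ℕ}

/-- The assignment mapping exactly the variables chosen by `f` to true; it encodes a weight-`k`
assignment by an injective choice of `k` variables. -/
def rangeAssignment (f : Fin k ↪ X) (x : X) : Bool := decide (∃ j, f j = x)

lemma weight_rangeAssignment [Fintype X] (f : Fin k ↪ X) : weight (rangeAssignment f) = k := by
  have htrue : (Finset.univ.filter fun x ↦ rangeAssignment f x = true) = Finset.univ.map f := by
    ext x
    simp [rangeAssignment]
  rw [weight, htrue, Finset.card_map, Finset.card_fin]

lemma exists_rangeAssignment_eq [Fintype X] {α : X → Bool} (hα : weight α = k) :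
    ∃ f : Fin k ↪ X, rangeAssignment f = α := by
  let e := Finset.equivFinOfCardEq hα
  refine ⟨e.symm.toEmbedding.trans (.subtype _), funext fun x ↦ Bool.eq_iff_iff.mpr ?_⟩
  simp only [rangeAssignment, decide_eq_true_iff]
  constructor
  · rintro ⟨j, rfl⟩
    exact (Finset.mem_filter.mp (e.symm j).2).2
  · intro hx
    exact ⟨e ⟨x, by simpa using hx⟩, by simp⟩

end Assignments

section Reduction

variable {n m k u : ℕ} {δ : Fin u → Fin 3 → (Fin n ⊕ Fin m) × Bool}
  {M N : Set (Atom1 n m k)}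

lemma xj_mem_head_guessRule1 {j j' : Fin k} {i : Fin n} :
    Atom1.xj j i ∈ (guessRule1 n m j').head ↔ j' = j := by
  simp [guessRule1]

lemma card_head_guessRule1 (j : Fin k) : (guessRule1 n m j).head.card = n := by
  rw [guessRule1, Finset.card_image_of_injective _ fun _ _ h ↦ (Atom1.xj.inj h).2, Finset.card_fin]

lemma guessRule1_injective (hn : 0 < n) : Function.Injective (guessRule1 n m (k := k)) := by
  intro j j' h
  have hmem : Atom1.xj j ⟨0, hn⟩ ∈ (guessRule1 n m j').head := h ▸ xj_mem_head_guessRule1.mpr rfl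
  exact (xj_mem_head_guessRule1.mp hmem).symm

lemma guessRule1_mem_prog1 (j : Fin k) : guessRule1 n m j ∈ prog1 k δ := .inl ⟨j, rfl⟩

lemma eq_guessRule1_of_xj_mem_head {r : Rule (Atom1 n m k)} (hr : r ∈ prog1 k δ) {j : Fin k}
    {i : Fin n} (hhead : Atom1.xj j i ∈ r.head) : r = guessRule1 n m j := by
  rcases hr with ⟨j', rfl⟩ | ⟨_, _, _, _, rfl⟩ | ⟨_, rfl⟩ | ⟨_, rfl⟩ | ⟨_, rfl⟩ | ⟨_, rfl⟩ |
    ⟨_, rfl⟩ | ⟨_, rfl⟩ | ⟨_, _, rfl⟩ | ⟨_, rfl⟩ | ⟨_, rfl⟩ | rfl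
  · rw [xj_mem_head_guessRule1.mp hhead]
  all_goals simp at hhead

lemma compulsory_of_forall_ne_xj {a : Atom1 n m k} (ha : ∀ j i, a ≠ .xj j i) :
    Compulsory (prog1 k δ) a := by
  have hw : Compulsory (prog1 k δ) .w := .loop _ (by simp [prog1])
  cases a with
  | xj j i => exact absurd rfl (ha j i)
  | w => exact hw
  | _ => exact hw.of_singleton_pos (by simp [prog1])

lemma not_compulsory_xj (hn : 2 ≤ n) (j : Fin k) (i : Fin n) :
    ¬ Compulsory (prog1 k δ) (.xj j i) := by
  intro h
  obtain ⟨r, hr, hhead⟩ := h.exists_head_eq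
  obtain rfl := eq_guessRule1_of_xj_mem_head hr (hhead ▸ Finset.mem_singleton_self _)
  have hcard := congrArg Finset.card hhead
  rw [card_head_guessRule1, Finset.card_singleton] at hcard
  omega

lemma compulsory_prog1_iff (hn : 2 ≤ n) {a : Atom1 n m k} :
    Compulsory (prog1 k δ) a ↔ ∀ j i, a ≠ .xj j i := by
  refine ⟨?_, compulsory_of_forall_ne_xj⟩
  rintro h j i rfl
  exact not_compulsory_xj hn j i h

lemma isContingentRule_prog1_iff (hn : 2 ≤ n) {r : Rule (Atom1 n m k)} :
    isContingentRule (prog1 k δ) r ↔ r ∈ Set.range (guessRule1 n m (k := k)) := by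
  rw [isContingentRule_iff]
  constructor
  · rintro ⟨hr, a, ha, hcomp⟩
    cases a with
    | xj j i => exact ⟨j, (eq_guessRule1_of_xj_mem_head hr ha).symm⟩
    | _ => exact absurd (compulsory_of_forall_ne_xj (by simp)) hcomp
  · rintro ⟨j, rfl⟩
    exact ⟨guessRule1_mem_prog1 j, .xj j ⟨0, by omega⟩, xj_mem_head_guessRule1.mpr rfl,
      not_compulsory_xj hn _ _⟩

lemma mem_progAtoms_prog1 (a : Atom1 n m k) : a ∈ progAtoms (prog1 k δ) := by
  cases a with
  | xj j i => exact ⟨_, guessRule1_mem_prog1 j, .inl (xj_mem_head_guessRule1.mpr rfl)⟩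
  | _ => exact (compulsory_of_forall_ne_xj (by simp)).mem_progAtoms

/-- `N` is a model of the GL reduct of `prog1 k δ` with respect to `M`, one field per kind of rule.
`M` enters only through the two kinds with a negative body. -/
structure IsReductModel (δ : Fin u → Fin 3 → (Fin n ⊕ Fin m) × Bool) (M N : Set (Atom1 n m k)) :
    Prop where
  exists_xj : ∀ j, ∃ i, Atom1.xj j i ∈ N
  not_xj_of_lt : ∀ i j j', j < j' → Atom1.xj j i ∈ N → Atom1.xj j' i ∉ N
  y_or_z : ∀ i, Atom1.y i ∈ N ∨ Atom1.z i ∈ N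
  w_of_y_of_z : ∀ i, Atom1.y i ∈ N → Atom1.z i ∈ N → Atom1.w ∈ N
  y_of_w : ∀ i, Atom1.w ∈ N → Atom1.y i ∈ N
  z_of_w : ∀ i, Atom1.w ∈ N → Atom1.z i ∈ N
  x_of_w : ∀ i, Atom1.w ∈ N → Atom1.x i ∈ N
  v_of_w : ∀ i, Atom1.w ∈ N → Atom1.v i ∈ N
  x_of_xj : ∀ i j, Atom1.xj j i ∈ N → Atom1.x i ∈ N
  v_of_forall_not_xj : ∀ i, (∀ j, Atom1.xj j i ∉ M) → Atom1.v i ∈ N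
  w_of_term : ∀ l, (∀ d, sigma1 k (δ l d) ∈ N) → Atom1.w ∈ N
  w_of_not_w : Atom1.w ∉ M → Atom1.w ∈ N

lemma isReductModel_of_isModel (hmodel : isModel (reduct (prog1 k δ) M) N) :
    IsReductModel δ M N := by
  have h := isModel_reduct_iff.mp hmodel
  unfold Rule.satisfiedBy at h
  exact {
    exists_xj j := by simpa [guessRule1] using h _ (guessRule1_mem_prog1 j)
    not_xj_of_lt i j j' hlt := by simpa using h ⟨∅, {.xj j i, .xj j' i}, ∅⟩ (by grind [prog1])
    y_or_z i := by simpa using h ⟨{.y i, .z i}, ∅, ∅⟩ (by grind [prog1])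
    w_of_y_of_z i := by simpa using h ⟨{.w}, {.y i, .z i}, ∅⟩ (by grind [prog1])
    y_of_w i := by simpa using h ⟨{.y i}, {.w}, ∅⟩ (by simp [prog1])
    z_of_w i := by simpa using h ⟨{.z i}, {.w}, ∅⟩ (by simp [prog1])
    x_of_w i := by simpa using h ⟨{.x i}, {.w}, ∅⟩ (by simp [prog1])
    v_of_w i := by simpa using h ⟨{.v i}, {.w}, ∅⟩ (by simp [prog1])
    x_of_xj i j := by simpa using h ⟨{.x i}, {.xj j i}, ∅⟩ (by simp [prog1])
    v_of_forall_not_xj i := by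
      simpa using h ⟨{.v i}, ∅, Finset.univ.image fun j ↦ .xj j i⟩ (by simp [prog1])
    w_of_term l := by
      simpa [Fin.forall_fin_succ] using
        h ⟨{.w}, {sigma1 k (δ l 0), sigma1 k (δ l 1), sigma1 k (δ l 2)}, ∅⟩ (by grind [prog1])
    w_of_not_w := by simpa using h ⟨{.w}, ∅, {.w}⟩ (by simp [prog1]) }

lemma IsReductModel.isModel_reduct (h : IsReductModel δ M N) :
    isModel (reduct (prog1 k δ) M) N := by
  rw [isModel_reduct_iff]
  unfold Rule.satisfiedBy
  rintro r (⟨j, rfl⟩ | ⟨i, j, j', hlt, rfl⟩ | ⟨i, rfl⟩ | ⟨i, rfl⟩ | ⟨i, rfl⟩ | ⟨i, rfl⟩ |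
    ⟨i, rfl⟩ | ⟨i, rfl⟩ | ⟨i, j, rfl⟩ | ⟨i, rfl⟩ | ⟨l, rfl⟩ | rfl)
  · simpa [guessRule1] using h.exists_xj j
  · simpa using h.not_xj_of_lt i j j' hlt
  · simpa using h.y_or_z i
  · simpa using h.w_of_y_of_z i
  · simpa using h.y_of_w i
  · simpa using h.z_of_w i
  · simpa using h.x_of_w i
  · simpa using h.v_of_w i
  · simpa using h.x_of_xj i j
  · simpa using h.v_of_forall_not_xj i
  · simpa [Fin.forall_fin_succ] using h.w_of_term l
  · simpa using h.w_of_not_w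

/-- The compulsory atoms together with the atoms `x^j_{f j}`, as the only possible shape of an
answer set of `prog1 k δ`. -/
def saturatedAtoms (m : ℕ) (f : Fin k ↪ Fin n) : Set (Atom1 n m k) :=
  {a | match a with
    | .xj j i => f j = i
    | _ => True}

/-- The atoms `x^j_{f j}` together with the `sigma1`-images of the literals true under
`rangeAssignment f` on `X` and `β` on `Y`; the potential smaller models inside `saturatedAtoms`. -/
def assignmentAtoms (f : Fin k ↪ Fin n) (β : Fin m → Bool) : Set (Atom1 n m k) :=
  {a | match a with
    | .x i => rangeAssignment f i = true
    | .v i => rangeAssignment f i = false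
    | .y i => β i = true
    | .z i => β i = false
    | .w => False
    | .xj j i => f j = i}

variable {f : Fin k ↪ Fin n} {β : Fin m → Bool}

lemma sigma1_mem_assignmentAtoms {l : (Fin n ⊕ Fin m) × Bool} :
    sigma1 k l ∈ assignmentAtoms f β ↔ Sum.elim (rangeAssignment f) β l.1 = l.2 := by
  rcases l with ⟨i | i, _ | _⟩ <;> rfl

lemma assignmentAtoms_ssubset_saturatedAtoms : assignmentAtoms f β ⊂ saturatedAtoms m f := by
  refine ⟨fun a ha ↦ ?_, fun h ↦ h (a := .w) trivial⟩
  cases a with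
  | xj j i => exact ha
  | _ => trivial

lemma isReductModel_saturatedAtoms : IsReductModel δ M (saturatedAtoms m f) where
  exists_xj j := ⟨f j, rfl⟩
  not_xj_of_lt _ _ _ hlt hj hj' := hlt.ne (f.injective (hj.trans hj'.symm))
  y_or_z _ := .inl trivial
  w_of_y_of_z _ _ _ := trivial
  y_of_w _ _ := trivial
  z_of_w _ _ := trivial
  x_of_w _ _ := trivial
  v_of_w _ _ := trivial
  x_of_xj _ _ _ := trivial
  v_of_forall_not_xj _ _ := trivial
  w_of_term _ _ := trivial
  w_of_not_w _ := trivial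

lemma isReductModel_assignmentAtoms
    (hβ : ¬ SatisfiesDNF δ (Sum.elim (rangeAssignment f) β)) :
    IsReductModel δ (saturatedAtoms m f) (assignmentAtoms f β) where
  exists_xj j := ⟨f j, rfl⟩
  not_xj_of_lt _ _ _ hlt hj hj' := hlt.ne (f.injective (hj.trans hj'.symm))
  y_or_z i := Bool.eq_false_or_eq_true (β i)
  w_of_y_of_z _ hy hz := Bool.false_ne_true (hz.symm.trans hy)
  y_of_w _ := False.elim
  z_of_w _ := False.elim
  x_of_w _ := False.elim
  v_of_w _ := False.elim
  x_of_xj _ j hj := decide_eq_true ⟨j, hj⟩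
  v_of_forall_not_xj _ hi := decide_eq_false fun ⟨j, hj⟩ ↦ hi j hj
  w_of_term l hl := hβ ⟨l, fun d ↦ sigma1_mem_assignmentAtoms.mp (hl d)⟩
  w_of_not_w hw := hw trivial

namespace IsReductModel

lemma w_mem (h : IsReductModel δ M M) : Atom1.w ∈ M := by
  by_contra hw
  exact hw (h.w_of_not_w hw)

lemma exists_embedding (h : IsReductModel δ M N) :
    ∃ f : Fin k ↪ Fin n, ∀ j, Atom1.xj j (f j) ∈ N := by
  choose f hf using h.exists_xj
  have hne : ∀ j j', j < j' → f j ≠ f j' := fun j j' hlt heq ↦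
    h.not_xj_of_lt (f j) j j' hlt (hf j) (heq ▸ hf j')
  exact ⟨⟨f, .of_lt_imp_ne hne⟩, hf⟩

lemma saturatedAtoms_subset (h : IsReductModel δ M N) (hf : ∀ j, Atom1.xj j (f j) ∈ N)
    (hw : Atom1.w ∈ N) : saturatedAtoms m f ⊆ N := by
  intro a ha
  cases a with
  | x i => exact h.x_of_w i hw
  | y i => exact h.y_of_w i hw
  | v i => exact h.v_of_w i hw
  | z i => exact h.z_of_w i hw
  | w => exact hw
  | xj j i => exact (show f j = i from ha) ▸ hf j

lemma exists_assignmentAtoms_subset (h : IsReductModel δ (saturatedAtoms m f) N)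
    (hf : ∀ j, Atom1.xj j (f j) ∈ N) : ∃ β, assignmentAtoms f β ⊆ N := by
  classical
  refine ⟨fun i ↦ decide (Atom1.y i ∈ N), fun a ha ↦ ?_⟩
  cases a with
  | x i =>
    obtain ⟨j, rfl⟩ := of_decide_eq_true ha
    exact h.x_of_xj _ j (hf j)
  | y i => exact of_decide_eq_true ha
  | v i => exact h.v_of_forall_not_xj i fun j hj ↦ of_decide_eq_false ha ⟨j, hj⟩
  | z i => exact (h.y_or_z i).resolve_left (of_decide_eq_false ha)
  | w => exact ha.elim
  | xj j i => exact (show f j = i from ha) ▸ hf j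

end IsReductModel

lemma isAnswerSet_prog1_iff :
    isAnswerSet (prog1 k δ) M ↔ Minimal (IsReductModel δ M) M := by
  have hmodel : isModel (reduct (prog1 k δ) M) = IsReductModel δ M :=
    funext fun _ ↦ propext ⟨isReductModel_of_isModel, IsReductModel.isModel_reduct⟩
  rw [isAnswerSet, isMinimalModel_iff_minimal, hmodel]
  exact and_iff_right fun a _ ↦ mem_progAtoms_prog1 a

lemma isAnswerSet_saturatedAtoms_iff :
    isAnswerSet (prog1 k δ) (saturatedAtoms m f) ↔
      ∀ β, SatisfiesDNF δ (Sum.elim (rangeAssignment f) β) := by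
  rw [isAnswerSet_prog1_iff]
  constructor
  · intro hmin β
    by_contra hβ
    exact hmin.not_prop_of_lt assignmentAtoms_ssubset_saturatedAtoms
      (isReductModel_assignmentAtoms hβ)
  · refine fun hsat ↦ ⟨isReductModel_saturatedAtoms, fun N hN hsub ↦ ?_⟩
    have hf (j : Fin k) : Atom1.xj j (f j) ∈ N := by
      obtain ⟨i, hi⟩ := hN.exists_xj j
      exact (show f j = i from hsub hi) ▸ hi
    obtain ⟨β, hβ⟩ := hN.exists_assignmentAtoms_subset hf
    obtain ⟨l, hl⟩ := hsat β
    have hw : Atom1.w ∈ N := hN.w_of_term l fun d ↦ hβ (sigma1_mem_assignmentAtoms.mpr (hl d))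
    exact hN.saturatedAtoms_subset hf hw

lemma exists_saturatedAtoms_eq_of_isAnswerSet (hM : isAnswerSet (prog1 k δ) M) :
    ∃ f : Fin k ↪ Fin n, saturatedAtoms m f = M := by
  rw [isAnswerSet_prog1_iff] at hM
  obtain ⟨f, hf⟩ := hM.prop.exists_embedding
  exact ⟨f, hM.eq_of_subset isReductModel_saturatedAtoms
    (hM.prop.saturatedAtoms_subset hf hM.prop.w_mem)⟩

lemma exists_isAnswerSet_prog1_iff :
    (∃ M, isAnswerSet (prog1 k δ) M) ↔
      ∃ α, weight α = k ∧ ∀ β, SatisfiesDNF δ (Sum.elim α β) := by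
  constructor
  · rintro ⟨M, hM⟩
    obtain ⟨f, rfl⟩ := exists_saturatedAtoms_eq_of_isAnswerSet hM
    exact ⟨rangeAssignment f, weight_rangeAssignment f, isAnswerSet_saturatedAtoms_iff.mp hM⟩
  · rintro ⟨α, hα, hsat⟩
    obtain ⟨f, rfl⟩ := exists_rangeAssignment_eq hα
    exact ⟨saturatedAtoms m f, isAnswerSet_saturatedAtoms_iff.mpr hsat⟩

end Reduction

/-- Correctness of the reduction from ∃ᵏ∀*-WSat(3DNF) to ASP-consistency parameterized
by the number of contingent rules: the compulsory atoms of the constructed program `P`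
are exactly `{w} ∪ {x_i, v_i} ∪ {y_i, z_i}`, the contingent rules of `P` are exactly
the `k` guessing rules `(x^j_1 ∨ … ∨ x^j_n ←)`, and there is a weight-`k` assignment
`α` to `X` such that every assignment `β` to `Y` makes `α ∪ β` satisfy `ψ` iff `P`
has an answer set. -/
theorem statement1 {n m k u : ℕ} (hk : 1 ≤ k) (hn : 2 ≤ n)
    (δ : Fin u → Fin 3 → (Fin n ⊕ Fin m) × Bool) :
    ({a : Atom1 n m k | Compulsory (prog1 k δ) a}
        = {a : Atom1 n m k | a = Atom1.w ∨ (∃ i, a = Atom1.x i) ∨ (∃ i, a = Atom1.v i)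
            ∨ (∃ i, a = Atom1.y i) ∨ (∃ i, a = Atom1.z i)}) ∧
    ({r : Rule (Atom1 n m k) | isContingentRule (prog1 k δ) r}
        = Set.range (guessRule1 n m (k := k))) ∧
    Function.Injective (guessRule1 n m (k := k)) ∧
    ((∃ α : Fin n → Bool, weight α = k ∧
        ∀ β : Fin m → Bool, ∃ l : Fin u, ∀ d : Fin 3,
          Sum.elim α β (δ l d).1 = (δ l d).2) ↔
      ∃ M : Set (Atom1 n m k), isAnswerSet (prog1 k δ) M) := by
  refine ⟨?_, Set.ext fun r ↦ isContingentRule_prog1_iff hn, guessRule1_injective (by omega),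
    exists_isAnswerSet_prog1_iff.symm⟩
  ext a
  rw [Set.mem_ofPred_eq, compulsory_prog1_iff hn]
  cases a <;> simp
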